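/- The subgroup of SL(2,ℤ) generated by the matrices A = [[1,1],[0,1]] and B³ = [[1,0],[-3,1]] has index exactly 8 in SL(2,ℤ). -/

import Mathlib

/-- The matrix `A = [[1,1],[0,1]]` as an element of `SL(2,ℤ)`. -/
def A : Matrix.SpecialLinearGroup (Fin 2) ℤ :=
  ⟨!![1, 1; 0, 1], by norm_num [Matrix.det_fin_two_of]⟩

/-- The matrix `B = [[1,0],[-1,1]]` as an element of `SL(2,ℤ)`. -/
def B : Matrix.SpecialLinearGroup (Fin 2) ℤ :=
  ⟨!![1, 0; -1, 1], by norm_num [Matrix.det_fin_two_of]⟩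

/-!
For `N = 3, 4` the matrices `A` and `B ^ N` generate the congruence subgroup `Γ₁(N)`. Indeed,
multiplying `g ∈ Γ₁(N)` on the left by powers of `A` and `B ^ N` performs a Euclidean algorithm
with centred remainders on its first column `(a, c)`: first `a` is reduced modulo `c`, and then `c`
modulo `N * a`. After the first step `2 * |a| < |c|`, since equality would force `N ∣ 2`; as
`N ≤ 4`, each round therefore decreases `|c|`, until `c = 0` and `g` is a power of `A`.

Also, `Γ₁(p)` is the stabilizer of the vector `(1, 0)` of `𝔽_p²`, whose orbit under `SL(2,ℤ)`
consists of the `p ^ 2 - 1` nonzero vectors.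
-/

open Matrix CongruenceSubgroup
open scoped MatrixGroups

lemma mem_Gamma1_iff_col_zero {N : ℕ} {g : SL(2, ℤ)} :
    g ∈ Gamma1 N ↔ (g 0 0 : ZMod N) = 1 ∧ (g 1 0 : ZMod N) = 0 := by
  have hdet : (g 0 0 : ZMod N) * g 1 1 - g 0 1 * g 1 0 = 1 := by
    exact_mod_cast congrArg (Int.cast (R := ZMod N)) ((Matrix.det_fin_two _).symm.trans g.det_coe)
  rw [Gamma1_mem]
  grind

lemma SL2_map_surjective {R F : Type*} [CommRing R] [Field F] {f : R →+* F}
    (hf : Function.Surjective f) :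
    Function.Surjective (Matrix.SpecialLinearGroup.map f : SL(2, R) →* SL(2, F)) := by
  refine fun g ↦ SL2.transvection_induction (· ∈ (Matrix.SpecialLinearGroup.map f).range) ?_
    (fun _ _ ↦ mul_mem) g
  intro i j hij x
  obtain ⟨r, rfl⟩ := hf x
  refine ⟨Matrix.SpecialLinearGroup.transvection hij r, Subtype.ext ?_⟩
  simp [Matrix.SpecialLinearGroup.transvection_coe, Matrix.map_add]

lemma SL2_smul_one_zero {R : Type*} [CommRing R] (g : SL(2, R)) :
    g • ![(1 : R), 0] = ![g 0 0, g 1 0] := by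
  rw [Matrix.SpecialLinearGroup.smul_def, smul_eq_mulVec]
  ext i
  fin_cases i <;> simp

lemma orbit_SL2_one_zero (R : Type*) [CommRing R] :
    MulAction.orbit SL(2, R) ![(1 : R), 0] = {v | IsCoprime (v 0) (v 1)} := by
  ext v
  simp only [MulAction.mem_orbit_iff, SL2_smul_one_zero, Set.mem_ofPred_eq]
  constructor
  · rintro ⟨g, rfl⟩
    exact Matrix.SpecialLinearGroup.isCoprime_col g 0
  · intro hv
    obtain ⟨g, h₀, h₁⟩ := hv.exists_SL2_col 0
    exact ⟨g, funext (Fin.forall_fin_two.2 ⟨h₀, h₁⟩)⟩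

lemma index_stabilizer_SL2_one_zero (F : Type*) [Field F] [Finite F] :
    (MulAction.stabilizer SL(2, F) ![(1 : F), 0]).index = Nat.card F ^ 2 - 1 := by
  have orbit_eq : MulAction.orbit SL(2, F) ![(1 : F), 0] = {0}ᶜ := by
    ext v
    simp only [orbit_SL2_one_zero, Set.mem_ofPred_eq, Semifield.isCoprime_iff, ne_eq,
      Set.mem_compl_iff, Set.mem_singleton_iff, funext_iff, Fin.forall_fin_two, Pi.zero_apply]
    tauto
  rw [MulAction.index_stabilizer, orbit_eq, Set.ncard_compl, Set.ncard_singleton, Nat.card_fun,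
    Nat.card_fin]

lemma Gamma1_eq_comap_stabilizer (N : ℕ) :
    Gamma1 N = (MulAction.stabilizer SL(2, ZMod N) ![(1 : ZMod N), 0]).comap
      (Matrix.SpecialLinearGroup.map (Int.castRingHom (ZMod N))) := by
  ext g
  simp [-Gamma1_mem, mem_Gamma1_iff_col_zero, SL2_smul_one_zero]

theorem index_Gamma1_of_prime (p : ℕ) [Fact p.Prime] : (Gamma1 p).index = p ^ 2 - 1 := by
  rw [Gamma1_eq_comap_stabilizer,
    Subgroup.index_comap_of_surjective _ (SL2_map_surjective ZMod.intCast_surjective),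
    index_stabilizer_SL2_one_zero, Nat.card_zmod]

lemma coe_A_zpow (k : ℤ) : (A ^ k).1 = !![1, k; 0, 1] :=
  ModularGroup.coe_T_zpow k

lemma B_eq_conj_T : B = ModularGroup.S * ModularGroup.T * ModularGroup.S⁻¹ := by
  decide

lemma coe_B_zpow (k : ℤ) : (B ^ k).1 = !![1, 0; -k, 1] := by
  rw [B_eq_conj_T, conj_zpow]
  simp [ModularGroup.coe_T_zpow, ModularGroup.coe_S]

lemma A_zpow_mul_apply_zero (k : ℤ) (g : SL(2, ℤ)) (j : Fin 2) :
    (A ^ k * g) 0 j = g 0 j + k * g 1 j := by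
  simp [coe_A_zpow, Matrix.vecMul, dotProduct, Fin.sum_univ_two]

lemma B_zpow_mul_apply_one (k : ℤ) (g : SL(2, ℤ)) (j : Fin 2) :
    (B ^ k * g) 1 j = g 1 j - k * g 0 j := by
  simp [coe_B_zpow, Matrix.vecMul, dotProduct, Fin.sum_univ_two, sub_eq_neg_add]

lemma exists_two_mul_abs_add_mul_le (a : ℤ) {c : ℤ} (hc : c ≠ 0) :
    ∃ k : ℤ, 2 * |a + k * c| ≤ |c| := by
  refine ⟨-round (a / c : ℚ), ?_⟩
  have hc' : (c : ℚ) ≠ 0 := mod_cast hc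
  suffices 2 * |(a + -round (a / c : ℚ) * c : ℚ)| ≤ |(c : ℚ)| by exact_mod_cast this
  calc 2 * |(a + -round (a / c : ℚ) * c : ℚ)|
      = 2 * |(a / c - round (a / c : ℚ) : ℚ)| * |(c : ℚ)| := by
        rw [mul_assoc, ← abs_mul, sub_mul, div_mul_cancel₀ _ hc', neg_mul, ← sub_eq_add_neg]
    _ ≤ 2 * (1 / 2) * |(c : ℚ)| := by
        gcongr
        exact abs_sub_round _
    _ = |(c : ℚ)| := by ring

lemma mem_Gamma1_iff_dvd {N : ℕ} {g : SL(2, ℤ)} :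
    g ∈ Gamma1 N ↔ (N : ℤ) ∣ g 0 0 - 1 ∧ (N : ℤ) ∣ g 1 0 := by
  rw [mem_Gamma1_iff_col_zero, ← ZMod.intCast_zmod_eq_zero_iff_dvd,
    ← ZMod.intCast_zmod_eq_zero_iff_dvd, Int.cast_sub, Int.cast_one, sub_eq_zero]

lemma apply_zero_zero_ne_zero_of_mem_Gamma1 {N : ℕ} (hN : N ≠ 1) {g : SL(2, ℤ)}
    (hg : g ∈ Gamma1 N) : g 0 0 ≠ 0 := by
  intro ha
  have h := (mem_Gamma1_iff_dvd.1 hg).1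
  rw [ha, zero_sub, dvd_neg] at h
  exact hN (Nat.dvd_one.1 (mod_cast h))

lemma A_mem_Gamma1 (N : ℕ) : A ∈ Gamma1 N :=
  mem_Gamma1_iff_dvd.2 (by simp [A])

lemma B_pow_mem_Gamma1 (N : ℕ) : B ^ N ∈ Gamma1 N := by
  have coe_B_pow : (B ^ N).1 = !![1, 0; -(N : ℤ), 1] := mod_cast coe_B_zpow N
  simp [mem_Gamma1_iff_dvd, coe_B_pow, -Gamma1_mem, -Matrix.SpecialLinearGroup.coe_pow]

lemma eq_A_zpow_of_mem_Gamma1 {N : ℕ} (hN : 2 < N) {g : SL(2, ℤ)} (hg : g ∈ Gamma1 N)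
    (hc : g 1 0 = 0) : g = A ^ g 0 1 := by
  have hdet : g 0 0 * g 1 1 = 1 := by
    simpa [hc] using (Matrix.det_fin_two g.1).symm.trans g.det_coe
  have ha : g 0 0 ≠ -1 := by
    intro ha
    have h := Int.le_of_dvd two_pos ((dvd_neg.2 (mem_Gamma1_iff_dvd.1 hg).1).trans (by simp [ha]))
    omega
  obtain ⟨h00, h11⟩ := (Int.mul_eq_one_iff_eq_one_or_neg_one.1 hdet).resolve_right fun h ↦ ha h.1
  ext i j
  fin_cases i <;> fin_cases j <;> simp [coe_A_zpow, h00, h11, hc]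

lemma exists_two_mul_abs_A_zpow_mul_lt {N : ℕ} (hN : 2 < N) {g : SL(2, ℤ)} (hg : g ∈ Gamma1 N)
    (hc : g 1 0 ≠ 0) : ∃ k : ℤ, 2 * |(A ^ k * g) 0 0| < |g 1 0| := by
  obtain ⟨k, hk⟩ := exists_two_mul_abs_add_mul_le (g 0 0) hc
  rw [← A_zpow_mul_apply_zero] at hk
  refine ⟨k, hk.lt_of_ne fun h ↦ ?_⟩
  have h₁ : (N : ℤ) ∣ (A ^ k * g) 0 0 - 1 :=
    (mem_Gamma1_iff_dvd.1 (mul_mem (zpow_mem (A_mem_Gamma1 N) k) hg)).1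
  have h₂ : (N : ℤ) ∣ 2 * (A ^ k * g) 0 0 := by
    rw [← dvd_abs, abs_mul, abs_two, h, dvd_abs]
    exact (mem_Gamma1_iff_dvd.1 hg).2
  have h₃ : (N : ℤ) ∣ 2 := by
    convert! dvd_sub h₂ (h₁.mul_left 2) using 1
    ring
  have := Int.le_of_dvd two_pos h₃
  omega

lemma exists_two_mul_abs_Bpow_zpow_mul_le {N : ℕ} (hN : N ≠ 0) {g : SL(2, ℤ)} (ha : g 0 0 ≠ 0) :
    ∃ l : ℤ, 2 * |((B ^ N) ^ l * g) 1 0| ≤ N * |g 0 0| := by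
  obtain ⟨l, hl⟩ := exists_two_mul_abs_add_mul_le (g 1 0)
    (mul_ne_zero (Nat.cast_ne_zero.2 hN : (N : ℤ) ≠ 0) ha)
  refine ⟨-l, ?_⟩
  rw [← zpow_natCast, ← _root_.zpow_mul, B_zpow_mul_apply_one]
  rw [abs_mul, Nat.abs_cast] at hl
  convert! hl using 3
  ring

lemma exists_abs_apply_one_zero_lt {N : ℕ} (hN : 2 < N) (hN' : N ≤ 4) {g : SL(2, ℤ)}
    (hg : g ∈ Gamma1 N) (hc : g 1 0 ≠ 0) :
    ∃ k l : ℤ, |((B ^ N) ^ l * (A ^ k * g)) 1 0| < |g 1 0| := by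
  obtain ⟨k, hk⟩ := exists_two_mul_abs_A_zpow_mul_lt hN hg hc
  have ha : (A ^ k * g) 0 0 ≠ 0 :=
    apply_zero_zero_ne_zero_of_mem_Gamma1 (by omega) (mul_mem (zpow_mem (A_mem_Gamma1 N) k) hg)
  obtain ⟨l, hl⟩ := exists_two_mul_abs_Bpow_zpow_mul_le (by omega : N ≠ 0) ha
  refine ⟨k, l, ?_⟩
  have : N * |(A ^ k * g) 0 0| ≤ 4 * |(A ^ k * g) 0 0| := by
    gcongr
    exact_mod_cast hN'
  linarith

theorem closure_A_Bpow_eq_Gamma1 {N : ℕ} (hN : 2 < N) (hN' : N ≤ 4) :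
    Subgroup.closure {A, B ^ N} = Gamma1 N := by
  have hle : Subgroup.closure {A, B ^ N} ≤ Gamma1 N := by
    simp only [Subgroup.closure_le, Set.insert_subset_iff, Set.singleton_subset_iff,
      SetLike.mem_coe, A_mem_Gamma1, B_pow_mem_Gamma1, and_self]
  have hA (k : ℤ) : A ^ k ∈ Subgroup.closure {A, B ^ N} :=
    zpow_mem (Subgroup.subset_closure (by simp)) k
  have hB (l : ℤ) : (B ^ N) ^ l ∈ Subgroup.closure {A, B ^ N} :=
    zpow_mem (Subgroup.subset_closure (by simp)) l
  refine hle.antisymm fun g hg ↦ ?_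
  induction hn : (g 1 0).natAbs using Nat.strong_induction_on generalizing g with
  | _ n ih =>
    subst hn
    by_cases hc : g 1 0 = 0
    · rw [eq_A_zpow_of_mem_Gamma1 hN hg hc]
      exact hA _
    · obtain ⟨k, l, hlt⟩ := exists_abs_apply_one_zero_lt hN hN' hg hc
      have hmem : (B ^ N) ^ l * (A ^ k * g) ∈ Subgroup.closure {A, B ^ N} :=
        ih _ (by zify; exact hlt) _ (mul_mem (hle (hB l)) (mul_mem (hle (hA k)) hg)) rfl
      rwa [Subgroup.mul_mem_cancel_left _ (hB l), Subgroup.mul_mem_cancel_left _ (hA k)] at hmem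

/-- The subgroup of `SL(2,ℤ)` generated by `A` and `B³` has index exactly 8. -/
theorem subgroup_A_Bcubed_index_eq_eight :
    (Subgroup.closure ({A, B ^ 3} : Set (Matrix.SpecialLinearGroup (Fin 2) ℤ))).index = 8 := by
  rw [closure_A_Bpow_eq_Gamma1 (by norm_num) (by norm_num), index_Gamma1_of_prime]
  norm_num
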